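/- (Dudley entropy integral bound) For a function class G of functions Z → ℝ and fixed data points z₁,…,z_n, the empirical Rademacher complexity satisfies R̂_n(G) ≤ inf_{ε ≥ 0} { 4ε + 12 ∫_ε^{sup_{G∈G} √(Ê[G²])} √(log N(G, τ, d_n)/n) dτ }, where d_n(g,h) = √((1/n)Σᵢ(g(zᵢ)−h(zᵢ))²) and N(G, τ, d_n) is the τ-covering number of G under d_n. -/

import Mathlib

open MeasureTheory

/-- The value `±1` of a Rademacher sign encoded as a boolean. -/
def signVal (b : Bool) : ℝ := if b then 1 else -1

/-- Empirical Rademacher complexity of a class `G` of functions on the sample `z`. -/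
noncomputable def empRad {Z : Type*} (G : Set (Z → ℝ)) {n : ℕ} (z : Fin n → Z) : ℝ :=
  (∑ σ : Fin n → Bool, ⨆ g : G, (n : ℝ)⁻¹ * ∑ i, signVal (σ i) * (g : Z → ℝ) (z i)) / 2 ^ n

/-- The empirical `L²` pseudometric on functions determined by the sample `z`:
`d_n(g,h) = √((1/n) ∑ᵢ (g(zᵢ) − h(zᵢ))²)`. -/
noncomputable def dnMetric {Z : Type*} {n : ℕ} (z : Fin n → Z) (g h : Z → ℝ) : ℝ :=
  Real.sqrt ((n : ℝ)⁻¹ * ∑ i, (g (z i) - h (z i)) ^ 2)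

/-- The `τ`-covering number of `G` under `d_n`: the minimal cardinality of a finite set of
functions `C` such that every `g ∈ G` is within distance `τ` of some member of `C`. -/
noncomputable def covNum {Z : Type*} {n : ℕ} (z : Fin n → Z) (G : Set (Z → ℝ)) (τ : ℝ) : ℕ :=
  sInf {k | ∃ C : Finset (Z → ℝ), C.card = k ∧ ∀ g ∈ G, ∃ h ∈ C, dnMetric z g h ≤ τ}

/-!
The Rademacher process on the class has sub-Gaussian increments for the empirical metric, so it
can be chained. At each scale `δ = D / 2 ^ j` take an external cover and keep only the centers
within `δ` of the class; such a center lies within `3 * δ` of a center at scale `2 * δ`. The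
maximal inequality for sub-Gaussian variables, obtained from a tangent line to `exp`, bounds the
cost of this link by a multiple of `δ` times the root of the entropy at `δ`, and the sum over the
scales is a lower Riemann sum of the entropy integral. The chain stops at a scale comparable to
`ε`, and the rest is controlled by the Lipschitz bound, which gives the term `4 * ε`.

For `ε = 0` one lets `ε` decrease to `0`. This needs the entropy integral to converge at `0`,
since a divergent integral would have the junk value `0`: the class lives in a ball of the
Euclidean space of values on the sample, and a volume comparison bounds the entropy at `τ` by a
multiple of `1 / τ`.
-/

open Metric ProbabilityTheory Set
open scoped NNReal ENNReal Topology

section MaximalInequality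

variable {Ω ι : Type*} [MeasurableSpace Ω] {μ : Measure Ω} {s : Finset ι} {Y : ι → Ω → ℝ}

theorem integrable_finset_sup' (hs : s.Nonempty) (hY : ∀ i ∈ s, Integrable (Y i) μ) :
    Integrable (fun ω => s.sup' hs fun i => Y i ω) μ := by
  have : Integrable (s.sup' hs Y) μ :=
    Finset.sup'_induction (p := (Integrable · μ)) hs Y (fun _ h₁ _ h₂ => h₁.sup h₂) hY
  simpa only [← Finset.sup'_apply] using this

theorem mul_integral_sup'_le_of_hasSubgaussianMGF [IsProbabilityMeasure μ] (hs : s.Nonempty)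
    {c : ι → ℝ≥0} {C : ℝ} (hY : ∀ i ∈ s, HasSubgaussianMGF (Y i) (c i) μ)
    (hc : ∀ i ∈ s, c i ≤ C) (t : ℝ) :
    t * ∫ ω, s.sup' hs (fun i => Y i ω) ∂μ ≤ Real.log s.card + C * t ^ 2 / 2 := by
  set a := Real.log s.card + C * t ^ 2 / 2
  have hsum_int : Integrable (fun ω => ∑ i ∈ s, Real.exp (t * Y i ω)) μ :=
    integrable_finsetSum _ fun i hi => (hY i hi).integrable_exp_mul t
  -- The tangent to `exp` at `a` linearizes the exponential of the maximum.
  have tangent (ω : Ω) : t * s.sup' hs (fun i => Y i ω) ≤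
      a - 1 + Real.exp (-a) * ∑ i ∈ s, Real.exp (t * Y i ω) := by
    obtain ⟨i, hi, hmax⟩ := s.exists_mem_eq_sup' hs fun i => Y i ω
    have hsingle := Finset.single_le_sum (f := fun i => Real.exp (t * Y i ω))
      (fun _ _ => (Real.exp_pos _).le) hi
    calc t * s.sup' hs (fun i => Y i ω) = a - 1 + (-a + t * Y i ω + 1) := by rw [hmax]; ring
      _ ≤ a - 1 + Real.exp (-a + t * Y i ω) := by gcongr; exact Real.add_one_le_exp _
      _ ≤ a - 1 + Real.exp (-a) * ∑ i ∈ s, Real.exp (t * Y i ω) := by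
        rw [Real.exp_add]; gcongr
  have mgf_sum : ∑ i ∈ s, mgf (Y i) μ t ≤ Real.exp a := by
    rw [Real.exp_add, Real.exp_log (by exact_mod_cast hs.card_pos), ← nsmul_eq_mul]
    refine Finset.sum_le_card_nsmul _ _ _ fun i hi => ((hY i hi).mgf_le t).trans ?_
    gcongr
    exact hc i hi
  calc t * ∫ ω, s.sup' hs (fun i => Y i ω) ∂μ
      = ∫ ω, t * s.sup' hs (fun i => Y i ω) ∂μ := (integral_const_mul _ _).symm
    _ ≤ ∫ ω, (a - 1 + Real.exp (-a) * ∑ i ∈ s, Real.exp (t * Y i ω)) ∂μ :=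
        integral_mono ((integrable_finset_sup' hs fun i hi => (hY i hi).integrable).const_mul t)
          ((integrable_const _).add (hsum_int.const_mul _)) tangent
    _ = a - 1 + Real.exp (-a) * ∑ i ∈ s, mgf (Y i) μ t := by
        rw [integral_add (integrable_const _) (hsum_int.const_mul _), integral_const_mul,
          integral_finsetSum _ fun i hi => (hY i hi).integrable_exp_mul t]
        simp [mgf]
    _ ≤ a - 1 + Real.exp (-a) * Real.exp a := by gcongr
    _ = a := by rw [← Real.exp_add]; simp

theorem integral_sup'_le_of_hasSubgaussianMGF [IsProbabilityMeasure μ] (hs : s.Nonempty)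
    {c : ι → ℝ≥0} {C : ℝ} (hY : ∀ i ∈ s, HasSubgaussianMGF (Y i) (c i) μ)
    (hc : ∀ i ∈ s, c i ≤ C) :
    ∫ ω, s.sup' hs (fun i => Y i ω) ∂μ ≤ √(2 * C * Real.log s.card) := by
  set m := ∫ ω, s.sup' hs (fun i => Y i ω) ∂μ
  have hdiscrim : discrim (C / 2) (-m) (Real.log s.card) ≤ 0 := discrim_le_zero fun t => by
    linarith [mul_integral_sup'_le_of_hasSubgaussianMGF hs hY hc t]
  rw [discrim] at hdiscrim
  exact Real.le_sqrt_of_sq_le (by linarith)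

end MaximalInequality

section Entropy

variable {T : Type*} [PseudoMetricSpace T] {A : Set T}

/-- The metric entropy of `A` at scale `τ`: the logarithm of the least number of closed balls of
radius `τ`, with centers anywhere in the space, that cover `A`. It is meant for `0 ≤ τ` and has
the junk value `0` where no finite cover exists. -/
noncomputable def metricEntropy (A : Set T) (τ : ℝ) : ℝ :=
  Real.log (externalCoveringNumber τ.toNNReal A).toNat

theorem metricEntropy_nonneg (A : Set T) (τ : ℝ) : 0 ≤ metricEntropy A τ :=
  Real.log_natCast_nonneg _

theorem isCover_toNNReal_iff {τ : ℝ} (hτ : 0 ≤ τ) {C : Set T} :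
    IsCover τ.toNNReal A C ↔ ∀ t ∈ A, ∃ s ∈ C, dist t s ≤ τ := by
  simp only [isCover_iff_subset_iUnion_closedBall, Real.coe_toNNReal _ hτ, subset_def,
    mem_iUnion₂, mem_closedBall, exists_prop]

theorem exists_encard_eq_externalCoveringNumber (r : ℝ≥0) (A : Set T) :
    ∃ C, IsCover r A C ∧ C.encard = externalCoveringNumber r A := by
  have : Nonempty {C : Set T // IsCover r A C} := ⟨A, IsCover.rfl⟩
  obtain ⟨C, hC⟩ := ENat.exists_eq_iInf fun C : {C : Set T // IsCover r A C} => C.1.encard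
  exact ⟨C, C.2, by rw [hC, externalCoveringNumber, iInf_subtype]⟩

theorem externalCoveringNumber_ne_top_of_totallyBounded (hA : TotallyBounded A) {r : ℝ≥0}
    (hr : r ≠ 0) : externalCoveringNumber r A ≠ ⊤ := by
  obtain ⟨C, -, hfin, hC⟩ := exists_finite_isCover_of_totallyBounded hr hA
  exact ne_top_of_le_ne_top hfin.encard_lt_top.ne hC.externalCoveringNumber_le_encard

theorem metricEntropy_antitoneOn (hA : TotallyBounded A) :
    AntitoneOn (metricEntropy A) (Ioi 0) := by
  intro r (hr : 0 < r) τ _ hrτ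
  rcases A.eq_empty_or_nonempty with rfl | hne
  · simp [metricEntropy]
  have hfin {x : ℝ} (hx : 0 < x) : externalCoveringNumber x.toNNReal A ≠ ⊤ :=
    externalCoveringNumber_ne_top_of_totallyBounded hA (by simpa using hx)
  have hpos : (externalCoveringNumber τ.toNNReal A).toNat ≠ 0 := by
    simp [hfin (hr.trans_le hrτ), hne.ne_empty]
  have hle := ENat.toNat_le_toNat
    (externalCoveringNumber_anti (A := A) (Real.toNNReal_le_toNNReal hrτ)) (hfin hr)
  exact Real.log_le_log (by positivity) (by exact_mod_cast hle)

theorem sqrt_metricEntropy_antitoneOn (hA : TotallyBounded A) :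
    AntitoneOn (fun τ => √(metricEntropy A τ)) (Ioi 0) :=
  fun _ hr _ hτ hrτ => Real.sqrt_le_sqrt (metricEntropy_antitoneOn hA hr hτ hrτ)

theorem metricEntropy_eq_zero_of_subset_closedBall {t₀ : T} {D τ : ℝ}
    (hAD : A ⊆ closedBall t₀ D) (hDτ : D ≤ τ) : metricEntropy A τ = 0 := by
  have hcover : IsCover τ.toNNReal A {t₀} := by
    rw [isCover_iff_subset_iUnion_closedBall]
    simpa using hAD.trans (closedBall_subset_closedBall (hDτ.trans τ.le_coe_toNNReal))
  have hle : (externalCoveringNumber τ.toNNReal A).toNat ≤ 1 :=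
    ENat.toNat_le_of_le_natCast (by simpa using hcover.externalCoveringNumber_le_encard)
  interval_cases h : (externalCoveringNumber τ.toNNReal A).toNat <;> simp [metricEntropy, h]

theorem integral_sqrt_metricEntropy_eq_zero_of_le {t₀ : T} {D ε : ℝ} (hAD : A ⊆ closedBall t₀ D)
    (hDε : D ≤ ε) : ∫ τ in ε..D, √(metricEntropy A τ) = 0 :=
  intervalIntegral.integral_zero_ae <| ae_of_all _ fun τ hτ => by
    rw [uIoc_of_ge hDε] at hτ
    rw [metricEntropy_eq_zero_of_subset_closedBall hAD hτ.1.le, Real.sqrt_zero]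

theorem integral_sqrt_metricEntropy_nonneg {t₀ : T} {D : ℝ} (hAD : A ⊆ closedBall t₀ D) (ε : ℝ) :
    0 ≤ ∫ τ in ε..D, √(metricEntropy A τ) := by
  rcases le_total ε D with hεD | hDε
  · exact intervalIntegral.integral_nonneg hεD fun τ _ => Real.sqrt_nonneg _
  · exact (integral_sqrt_metricEntropy_eq_zero_of_le hAD hDε).ge

theorem integral_sqrt_metricEntropy_le {t₀ : T} {D ε : ℝ} (hAD : A ⊆ closedBall t₀ D)
    (hint : IntervalIntegrable (fun τ => √(metricEntropy A τ)) volume 0 D) (hε : 0 ≤ ε) :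
    ∫ τ in ε..D, √(metricEntropy A τ) ≤ ∫ τ in 0..D, √(metricEntropy A τ) := by
  rcases le_total ε D with hεD | hDε
  · exact intervalIntegral.integral_mono_interval hε hεD le_rfl
      (ae_of_all _ fun τ => Real.sqrt_nonneg _) hint
  · exact (integral_sqrt_metricEntropy_eq_zero_of_le hAD hDε).trans_le
      (integral_sqrt_metricEntropy_nonneg hAD 0)

-- Centers that serve no point of `A` are discarded, so consecutive covers can be linked.
theorem exists_finset_cover_log_card_le_metricEntropy (hne : A.Nonempty) (hA : TotallyBounded A)
    {τ : ℝ} (hτ : 0 < τ) :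
    ∃ C : Finset T, Real.log C.card ≤ metricEntropy A τ ∧
      (∀ t ∈ A, ∃ s ∈ C, dist t s ≤ τ) ∧ ∀ s ∈ C, ∃ t ∈ A, dist t s ≤ τ := by
  classical
  obtain ⟨C, hC, hcard⟩ := exists_encard_eq_externalCoveringNumber τ.toNNReal A
  have hfin := externalCoveringNumber_ne_top_of_totallyBounded hA
    (r := τ.toNNReal) (by simpa using hτ)
  lift C to Finset T using encard_ne_top_iff.mp (hcard ▸ hfin)
  rw [isCover_toNNReal_iff hτ.le] at hC
  have hC' : ∀ t ∈ A, ∃ s ∈ C.filter (fun s => ∃ t ∈ A, dist t s ≤ τ), dist t s ≤ τ := by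
    intro t ht
    obtain ⟨s, hs, hts⟩ := hC t ht
    exact ⟨s, Finset.mem_filter.mpr ⟨hs, t, ht, hts⟩, hts⟩
  refine ⟨C.filter fun s => ∃ t ∈ A, dist t s ≤ τ, ?_, hC', fun s hs => (Finset.mem_filter.mp hs).2⟩
  obtain ⟨s, hs, -⟩ := hC' _ hne.some_mem
  rw [metricEntropy, ← hcard, encard_coe_eq_coe_finsetCard, ENat.toNat_natCast]
  have : 0 < (C.filter fun s => ∃ t ∈ A, dist t s ≤ τ).card := Finset.card_pos.mpr ⟨s, hs⟩
  gcongr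
  exact Finset.filter_subset _ _

end Entropy

section FiniteDimensional

variable {T E : Type*} [PseudoMetricSpace T] [NormedAddCommGroup E] [NormedSpace ℝ E]
  [FiniteDimensional ℝ E] {f : T → E} {A : Set T} {x : E} {R : ℝ}

theorem totallyBounded_of_isometry (hf : Isometry f) (hA : MapsTo f A (closedBall x R)) :
    TotallyBounded A :=
  (totallyBounded_image_iff hf.isUniformInducing).mp <|
    (isCompact_closedBall x R).totallyBounded.subset hA.image_subset

-- Volume comparison: the balls of radius `r / 2` around the images of an `r`-separated set are
-- disjoint.
theorem encard_le_of_isSeparated_of_isometry (hf : Isometry f) (hR : 0 ≤ R)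
    (hA : MapsTo f A (closedBall x R)) {r : ℝ≥0} (hr : 0 < r) (hsep : IsSeparated r A) :
    (A.encard : ℝ≥0∞) ≤ ENNReal.ofReal ((1 + 2 * R / r) ^ Module.finrank ℝ E) := by
  borelize E
  set μ : Measure E := Measure.addHaar
  have hr2 : (0 : ℝ) < r / 2 := by positivity
  have hdisj : Pairwise (Function.onFun Disjoint fun s : A => ball (f s) (r / 2)) := by
    intro s t hst
    have : (r : ℝ≥0∞) < edist (f s) (f t) := by
      rw [hf.edist_eq]
      exact hsep s.2 t.2 (Subtype.coe_ne_coe.mpr hst)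
    rw [edist_nndist, ENNReal.coe_lt_coe, ← NNReal.coe_lt_coe, coe_nndist] at this
    exact ball_disjoint_ball (by linarith)
  have hsub : ⋃ s : A, ball (f s) (r / 2) ⊆ closedBall x (R + r / 2) :=
    iUnion_subset fun s => ball_subset_closedBall.trans
      (closedBall_subset_closedBall' (by linarith [mem_closedBall.mp (hA s.2)]))
  have hvol := (tsum_meas_le_meas_iUnion_of_disjoint μ (fun s : A => measurableSet_ball)
    hdisj).trans (measure_mono hsub)
  simp only [Measure.addHaar_ball_of_pos μ _ hr2, ENNReal.tsum_set_const] at hvol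
  rw [Measure.addHaar_closedBall μ x (by positivity), ← mul_assoc,
    ENNReal.mul_le_mul_iff_left (measure_ball_pos μ 0 one_pos).ne' measure_ball_lt_top.ne,
    ← ENNReal.le_div_iff_mul_le (by simp [hr2]) (by simp),
    ← ENNReal.ofReal_div_of_pos (by positivity), ← div_pow] at hvol
  convert hvol using 4
  field_simp
  ring

theorem packingNumber_le_of_isometry (hf : Isometry f) (hR : 0 ≤ R)
    (hA : MapsTo f A (closedBall x R)) {r : ℝ≥0} (hr : 0 < r) :
    packingNumber r A ≤ ⌊(1 + 2 * R / r) ^ Module.finrank ℝ E⌋₊ := by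
  refine iSup₂_le fun C hCA => iSup_le fun hC => ?_
  have hcard := encard_le_of_isSeparated_of_isometry hf hR (hA.mono_left hCA) hr hC
  lift C to Finset T using encard_ne_top_iff.mp fun htop => by simp [htop] at hcard
  rw [encard_coe_eq_coe_finsetCard] at hcard ⊢
  rw [ENat.toENNReal_coe, ← ENNReal.ofReal_natCast,
    ENNReal.ofReal_le_ofReal_iff (by positivity)] at hcard
  exact_mod_cast Nat.le_floor hcard

theorem metricEntropy_le_of_isometry (hf : Isometry f) (hR : 0 ≤ R)
    (hA : MapsTo f A (closedBall x R)) {τ : ℝ} (hτ : 0 < τ) :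
    metricEntropy A τ ≤ Module.finrank ℝ E * (2 * R / τ) := by
  set N := (externalCoveringNumber τ.toNNReal A).toNat
  have hN : (N : ℝ) ≤ (1 + 2 * R / τ) ^ Module.finrank ℝ E := by
    have hle := ENat.toNat_le_of_le_natCast <|
      (externalCoveringNumber_le_coveringNumber _ _).trans <|
        (coveringNumber_le_packingNumber _ _).trans <|
          packingNumber_le_of_isometry hf hR hA (Real.toNNReal_pos.mpr hτ)
    rw [Real.coe_toNNReal _ hτ.le] at hle
    exact (Nat.cast_le.mpr hle).trans (Nat.floor_le (by positivity))
  rcases N.eq_zero_or_pos with hN0 | hN0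
  · have : metricEntropy A τ = 0 := (congrArg (fun k : ℕ => Real.log k) hN0).trans (by simp)
    rw [this]
    positivity
  calc metricEntropy A τ ≤ Real.log ((1 + 2 * R / τ) ^ Module.finrank ℝ E) :=
        Real.log_le_log (by exact_mod_cast hN0) hN
    _ = Module.finrank ℝ E * Real.log (1 + 2 * R / τ) := Real.log_pow _ _
    _ ≤ Module.finrank ℝ E * (2 * R / τ) := by
        gcongr
        linarith [Real.log_le_sub_one_of_pos (show 0 < 1 + 2 * R / τ by positivity)]

theorem intervalIntegrable_sqrt_metricEntropy_of_isometry (hf : Isometry f) (hR : 0 ≤ R)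
    (hA : MapsTo f A (closedBall x R)) :
    IntervalIntegrable (fun τ => √(metricEntropy A τ)) volume 0 R := by
  have hdom : IntervalIntegrable
      (fun τ : ℝ => √(Module.finrank ℝ E * (2 * R)) * τ ^ (-(1 / 2) : ℝ)) volume 0 R :=
    (intervalIntegral.intervalIntegrable_rpow' (by norm_num)).const_mul _
  rw [intervalIntegrable_iff_integrableOn_Ioc_of_le hR] at hdom ⊢
  have hanti := sqrt_metricEntropy_antitoneOn (totallyBounded_of_isometry hf hA)
  refine hdom.mono' (aemeasurable_restrict_of_antitoneOn measurableSet_Ioc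
    (hanti.mono Ioc_subset_Ioi_self)).aestronglyMeasurable ?_
  filter_upwards [ae_restrict_mem measurableSet_Ioc] with τ ⟨hτ, _⟩
  have hrpow : τ ^ (-(1 / 2) : ℝ) = √τ⁻¹ := by
    rw [Real.rpow_neg hτ.le, ← Real.sqrt_eq_rpow, Real.sqrt_inv]
  rw [Real.norm_of_nonneg (Real.sqrt_nonneg _), hrpow, ← Real.sqrt_mul (by positivity)]
  refine Real.sqrt_le_sqrt ((metricEntropy_le_of_isometry hf hR hA hτ).trans_eq ?_)
  ring

end FiniteDimensional

theorem sum_sub_mul_le_integral_of_antitoneOn {a : ℕ → ℝ} (ha : Antitone a) {f : ℝ → ℝ} {J : ℕ}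
    (hf : AntitoneOn f (Icc (a J) (a 0))) :
    ∑ j ∈ Finset.range J, (a j - a (j + 1)) * f (a j) ≤ ∫ τ in a J..a 0, f τ := by
  have hint {j : ℕ} (hj : j < J) : AntitoneOn f (Icc (a (j + 1)) (a j)) :=
    hf.mono (Icc_subset_Icc (ha hj) (ha j.zero_le))
  have hstep {j : ℕ} (hj : j < J) :
      (a j - a (j + 1)) * f (a j) ≤ ∫ τ in a (j + 1)..a j, f τ := by
    have hle := ha j.le_succ
    have := intervalIntegral.integral_mono_on (μ := volume) (f := fun _ => f (a j)) hle
      intervalIntegrable_const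
      (AntitoneOn.intervalIntegrable (by simpa [uIcc_of_le hle] using hint hj))
      fun τ hτ => hint hj hτ (right_mem_Icc.mpr hle) hτ.2
    simpa using this
  have hadj := intervalIntegral.sum_integral_adjacent_intervals (f := f) (μ := volume) (a := a)
    (n := J) fun j hj =>
      (AntitoneOn.intervalIntegrable (by simpa [uIcc_of_le (ha j.le_succ)] using hint hj)).symm
  rw [intervalIntegral.integral_symm, ← hadj, ← Finset.sum_neg_distrib]
  refine Finset.sum_le_sum fun j hj => ?_
  rw [← intervalIntegral.integral_symm]
  exact hstep (Finset.mem_range.mp hj)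

section Chaining

variable {T Ω : Type*} [PseudoMetricSpace T] [MeasurableSpace Ω] {μ : Measure Ω}
  {X : T → Ω → ℝ} {c K : ℝ≥0} {A : Set T} {t₀ : T} {D ε : ℝ}

/-- The process `X`, indexed by a pseudometric space, has sub-Gaussian increments: the variance
proxy of `X s - X t` is `c` times the squared distance from `s` to `t`. -/
def IsSubgaussianProcess (X : T → Ω → ℝ) (c : ℝ≥0) (μ : Measure Ω) : Prop :=
  ∀ s t, HasSubgaussianMGF (fun ω => X s ω - X t ω) (c * nndist s t ^ 2) μ

namespace IsSubgaussianProcess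

theorem integrable_sup'_sub (hX : IsSubgaussianProcess X c μ) {C : Finset T} (hC : C.Nonempty)
    (π : T → T) : Integrable (fun ω => C.sup' hC fun s => X s ω - X (π s) ω) μ :=
  integrable_finset_sup' hC fun s _ => (hX s (π s)).integrable

variable [IsProbabilityMeasure μ]

theorem integral_sup'_sub_le (hX : IsSubgaussianProcess X c μ) {C : Finset T} (hC : C.Nonempty)
    {π : T → T} {r : ℝ} (hr : 0 ≤ r) (hπ : ∀ s ∈ C, dist s (π s) ≤ r) :
    ∫ ω, C.sup' hC (fun s => X s ω - X (π s) ω) ∂μ ≤ r * √(2 * c * Real.log C.card) := by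
  have hproxy : ∀ s ∈ C, ((c * nndist s (π s) ^ 2 : ℝ≥0) : ℝ) ≤ c * r ^ 2 := fun s hs => by
    push_cast
    gcongr
    exact hπ s hs
  calc ∫ ω, C.sup' hC (fun s => X s ω - X (π s) ω) ∂μ
      ≤ √(2 * (c * r ^ 2) * Real.log C.card) :=
        integral_sup'_le_of_hasSubgaussianMGF hC (fun s _ => hX s (π s)) hproxy
    _ = r * √(2 * c * Real.log C.card) := by
        rw [← Real.sqrt_sq hr, ← Real.sqrt_mul (sq_nonneg r), Real.sqrt_sq hr]
        ring_nf

theorem integral_sup'_sub_le_add (hX : IsSubgaussianProcess X c μ) {C C' : Finset T}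
    (hC : C.Nonempty) (hC' : C'.Nonempty) (t₀ : T) {r : ℝ} (hr : 0 ≤ r)
    (hlink : ∀ s ∈ C', ∃ t ∈ C, dist s t ≤ r) :
    ∫ ω, C'.sup' hC' (fun s => X s ω - X t₀ ω) ∂μ ≤
      ∫ ω, C.sup' hC (fun s => X s ω - X t₀ ω) ∂μ + r * √(2 * c * Real.log C'.card) := by
  choose! π hπC hπ using hlink
  have hint := hX.integrable_sup'_sub hC fun _ => t₀
  have hpointwise (ω : Ω) : C'.sup' hC' (fun s => X s ω - X t₀ ω) ≤
      C.sup' hC (fun s => X s ω - X t₀ ω) + C'.sup' hC' fun s => X s ω - X (π s) ω := by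
    refine Finset.sup'_le _ _ fun s hs => ?_
    linarith [C.le_sup' (fun t => X t ω - X t₀ ω) (hπC s hs),
      C'.le_sup' (fun s => X s ω - X (π s) ω) hs]
  calc ∫ ω, C'.sup' hC' (fun s => X s ω - X t₀ ω) ∂μ
      ≤ ∫ ω, (C.sup' hC (fun s => X s ω - X t₀ ω) +
          C'.sup' hC' fun s => X s ω - X (π s) ω) ∂μ :=
        integral_mono (hX.integrable_sup'_sub hC' fun _ => t₀)
          (hint.add (hX.integrable_sup'_sub hC' π)) hpointwise
    _ ≤ _ := by
        rw [integral_add hint (hX.integrable_sup'_sub hC' π)]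
        gcongr
        exact hX.integral_sup'_sub_le hC' hr hπ

theorem exists_refined_cover_integral_sup'_sub_le (hX : IsSubgaussianProcess X c μ)
    (hne : A.Nonempty) (hA : TotallyBounded A) (t₀ : T) {δ : ℝ} (hδ : 0 < δ) {C : Finset T}
    (hC : C.Nonempty) (hcover : ∀ t ∈ A, ∃ s ∈ C, dist t s ≤ 2 * δ) :
    ∃ (C' : Finset T) (hC' : C'.Nonempty), (∀ t ∈ A, ∃ s ∈ C', dist t s ≤ δ) ∧
      ∫ ω, C'.sup' hC' (fun s => X s ω - X t₀ ω) ∂μ ≤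
        ∫ ω, C.sup' hC (fun s => X s ω - X t₀ ω) ∂μ + 6 * √c * (δ * √(metricEntropy A δ)) := by
  obtain ⟨C', hcard, hcover', hnear⟩ := exists_finset_cover_log_card_le_metricEntropy hne hA hδ
  obtain ⟨s', hs', -⟩ := hcover' _ hne.some_mem
  have hlink : ∀ s ∈ C', ∃ t ∈ C, dist s t ≤ 3 * δ := fun s hs => by
    obtain ⟨t, ht, hts⟩ := hnear s hs
    obtain ⟨s₀, hs₀, hts₀⟩ := hcover t ht
    exact ⟨s₀, hs₀, by linarith [dist_triangle_left s s₀ t]⟩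
  have hsqrt : √(2 * c * Real.log C'.card) ≤ 2 * (√c * √(metricEntropy A δ)) := by
    have hlog : (c : ℝ) * Real.log C'.card ≤ c * metricEntropy A δ := by gcongr
    have hnonneg := mul_nonneg c.coe_nonneg (metricEntropy_nonneg A δ)
    rw [← Real.sqrt_mul c.coe_nonneg, Real.sqrt_le_left (by positivity), mul_pow,
      Real.sq_sqrt hnonneg]
    linarith
  refine ⟨C', ⟨s', hs'⟩, hcover', ?_⟩
  calc ∫ ω, C'.sup' ⟨s', hs'⟩ (fun s => X s ω - X t₀ ω) ∂μ
      ≤ ∫ ω, C.sup' hC (fun s => X s ω - X t₀ ω) ∂μ + 3 * δ * √(2 * c * Real.log C'.card) :=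
        hX.integral_sup'_sub_le_add hC ⟨s', hs'⟩ t₀ (by positivity) hlink
    _ ≤ ∫ ω, C.sup' hC (fun s => X s ω - X t₀ ω) ∂μ +
          3 * δ * (2 * (√c * √(metricEntropy A δ))) := by gcongr
    _ = _ := by ring

theorem exists_cover_integral_sup'_sub_le (hX : IsSubgaussianProcess X c μ) (hne : A.Nonempty)
    (hA : TotallyBounded A) (hD : 0 < D) (hAD : A ⊆ closedBall t₀ D) (J : ℕ) :
    ∃ (C : Finset T) (hC : C.Nonempty), (∀ t ∈ A, ∃ s ∈ C, dist t s ≤ D / 2 ^ J) ∧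
      ∫ ω, C.sup' hC (fun s => X s ω - X t₀ ω) ∂μ ≤ 12 * √c *
        ∑ j ∈ Finset.range J, D / 2 ^ (j + 2) * √(metricEntropy A (D / 2 ^ (j + 1))) := by
  induction J with
  | zero =>
    refine ⟨{t₀}, Finset.singleton_nonempty t₀, fun t ht => ?_, by simp⟩
    simpa using hAD ht
  | succ J ih =>
    obtain ⟨C, hC, hcover, hbound⟩ := ih
    rw [show D / 2 ^ J = 2 * (D / 2 ^ (J + 1)) by field_simp; ring] at hcover
    obtain ⟨C', hC', hcover', hstep⟩ :=
      hX.exists_refined_cover_integral_sup'_sub_le hne hA t₀ (by positivity) hC hcover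
    refine ⟨C', hC', hcover', hstep.trans ?_⟩
    rw [Finset.sum_range_succ, mul_add]
    refine add_le_add hbound (le_of_eq ?_)
    rw [pow_succ _ (J + 1)]
    ring

theorem integral_iSup_sub_le_of_cover (hX : IsSubgaussianProcess X c μ)
    (hLip : ∀ ω, LipschitzWith K fun t => X t ω) (hne : A.Nonempty)
    (hsup : Integrable (fun ω => ⨆ t : A, (X t ω - X t₀ ω)) μ) {C : Finset T} (hC : C.Nonempty)
    {r : ℝ} (hcover : ∀ t ∈ A, ∃ s ∈ C, dist t s ≤ r) :
    ∫ ω, ⨆ t : A, (X t ω - X t₀ ω) ∂μ ≤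
      K * r + ∫ ω, C.sup' hC (fun s => X s ω - X t₀ ω) ∂μ := by
  have : Nonempty A := hne.to_subtype
  have hint := hX.integrable_sup'_sub hC fun _ => t₀
  have hpointwise (ω : Ω) : ⨆ t : A, (X t ω - X t₀ ω) ≤
      K * r + C.sup' hC fun s => X s ω - X t₀ ω := by
    refine ciSup_le fun t => ?_
    obtain ⟨s, hs, hts⟩ := hcover t t.2
    have hdist : X t ω - X s ω ≤ K * r := (le_abs_self _).trans <|
      ((hLip ω).dist_le_mul t s).trans (by gcongr)
    linarith [C.le_sup' (fun s => X s ω - X t₀ ω) hs]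
  calc ∫ ω, ⨆ t : A, (X t ω - X t₀ ω) ∂μ
      ≤ ∫ ω, (K * r + C.sup' hC fun s => X s ω - X t₀ ω) ∂μ :=
        integral_mono hsup ((integrable_const _).add hint) hpointwise
    _ = _ := by rw [integral_add (integrable_const _) hint]; simp

end IsSubgaussianProcess

theorem dyadic_sum_sqrt_metricEntropy_le (hA : TotallyBounded A) (hε : 0 < ε) {J : ℕ}
    (hJ : ε ≤ D / 2 ^ (J + 1)) :
    ∑ j ∈ Finset.range J, D / 2 ^ (j + 2) * √(metricEntropy A (D / 2 ^ (j + 1))) ≤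
      ∫ τ in ε..D, √(metricEntropy A τ) := by
  have hD : 0 < D := (div_pos_iff_of_pos_right (by positivity)).mp (hε.trans_le hJ)
  have hscale : Antitone fun j : ℕ => D / 2 ^ (j + 1) := fun i j hij => by
    dsimp only
    gcongr
    exact one_le_two
  have hεD : ε ≤ D := hJ.trans (div_le_self hD.le (one_le_pow₀ one_le_two))
  have hanti := sqrt_metricEntropy_antitoneOn hA
  calc ∑ j ∈ Finset.range J, D / 2 ^ (j + 2) * √(metricEntropy A (D / 2 ^ (j + 1)))
      = ∑ j ∈ Finset.range J,
          (D / 2 ^ (j + 1) - D / 2 ^ (j + 1 + 1)) * √(metricEntropy A (D / 2 ^ (j + 1))) := by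
        congr! 2 with j
        field_simp
        ring
    _ ≤ ∫ τ in D / 2 ^ (J + 1)..D / 2 ^ (0 + 1), √(metricEntropy A τ) :=
        sum_sub_mul_le_integral_of_antitoneOn hscale
          (hanti.mono fun τ hτ => hε.trans_le (hJ.trans hτ.1))
    _ ≤ ∫ τ in ε..D, √(metricEntropy A τ) :=
        intervalIntegral.integral_mono_interval hJ (hscale J.zero_le) (by linarith)
          (ae_of_all _ fun τ => Real.sqrt_nonneg _)
          (hanti.mono fun τ hτ => hε.trans_le (by simpa [hεD] using hτ.1)).intervalIntegrable

namespace IsSubgaussianProcess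

variable [IsProbabilityMeasure μ]

theorem integral_iSup_sub_le_entropy_integral_of_pos (hX : IsSubgaussianProcess X c μ)
    (hLip : ∀ ω, LipschitzWith K fun t => X t ω) (hne : A.Nonempty) (hA : TotallyBounded A)
    (hAD : A ⊆ closedBall t₀ D) (hsup : Integrable (fun ω => ⨆ t : A, (X t ω - X t₀ ω)) μ)
    (hε : 0 < ε) :
    ∫ ω, ⨆ t : A, (X t ω - X t₀ ω) ∂μ ≤
      4 * K * ε + 12 * √c * ∫ τ in ε..D, √(metricEntropy A τ) := by
  rcases le_total D (2 * ε) with hsmall | hlarge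
  · have hcover : ∀ t ∈ A, ∃ s ∈ ({t₀} : Finset T), dist t s ≤ D := by
      simpa [subset_def] using hAD
    have hcoarse := hX.integral_iSup_sub_le_of_cover hLip hne hsup
      (Finset.singleton_nonempty t₀) hcover
    have hint := integral_sqrt_metricEntropy_nonneg hAD ε
    calc ∫ ω, ⨆ t : A, (X t ω - X t₀ ω) ∂μ ≤ K * D := by simpa using hcoarse
      _ ≤ K * (4 * ε) := by gcongr; linarith
      _ ≤ _ := by linarith [mul_nonneg (Real.sqrt_nonneg c) hint]
  · obtain ⟨J, hJ, hJ'⟩ := exists_nat_pow_near ((one_le_div (by positivity)).mpr hlarge)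
      (one_lt_two (α := ℝ))
    rw [le_div_iff₀ (by positivity)] at hJ
    rw [div_lt_iff₀ (by positivity), pow_succ] at hJ'
    obtain ⟨C, hC, hcover, hchain⟩ :=
      hX.exists_cover_integral_sup'_sub_le hne hA (by linarith) hAD J
    have hfine : D / 2 ^ J ≤ 4 * ε := by
      rw [div_le_iff₀ (by positivity)]
      linarith
    have hscale : ε ≤ D / 2 ^ (J + 1) := by
      rw [le_div_iff₀ (by positivity), pow_succ]
      linarith
    calc ∫ ω, ⨆ t : A, (X t ω - X t₀ ω) ∂μ
        ≤ K * (D / 2 ^ J) + ∫ ω, C.sup' hC (fun s => X s ω - X t₀ ω) ∂μ :=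
          hX.integral_iSup_sub_le_of_cover hLip hne hsup hC hcover
      _ ≤ K * (4 * ε) + 12 * √c * ∫ τ in ε..D, √(metricEntropy A τ) := by
          gcongr
          exact hchain.trans (by gcongr; exact dyadic_sum_sqrt_metricEntropy_le hA hε hscale)
      _ = _ := by ring

theorem integral_iSup_sub_le_entropy_integral (hX : IsSubgaussianProcess X c μ)
    (hLip : ∀ ω, LipschitzWith K fun t => X t ω) (hne : A.Nonempty) (hA : TotallyBounded A)
    (hAD : A ⊆ closedBall t₀ D) (hsup : Integrable (fun ω => ⨆ t : A, (X t ω - X t₀ ω)) μ)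
    (hint : IntervalIntegrable (fun τ => √(metricEntropy A τ)) volume 0 D) (hε : 0 ≤ ε) :
    ∫ ω, ⨆ t : A, (X t ω - X t₀ ω) ∂μ ≤
      4 * K * ε + 12 * √c * ∫ τ in ε..D, √(metricEntropy A τ) := by
  rcases hε.eq_or_lt with rfl | hε
  · have hlim : Filter.Tendsto
        (fun η => 4 * K * η + 12 * √c * ∫ τ in 0..D, √(metricEntropy A τ)) (𝓝[>] 0)
        (𝓝 (4 * K * 0 + 12 * √c * ∫ τ in 0..D, √(metricEntropy A τ))) :=
      (Continuous.tendsto (by fun_prop) 0).mono_left nhdsWithin_le_nhds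
    refine ge_of_tendsto hlim ?_
    filter_upwards [self_mem_nhdsWithin] with η (hη : 0 < η)
    refine (hX.integral_iSup_sub_le_entropy_integral_of_pos hLip hne hA hAD hsup hη).trans ?_
    gcongr
    exact integral_sqrt_metricEntropy_le hAD hint hη.le
  · exact hX.integral_iSup_sub_le_entropy_integral_of_pos hLip hne hA hAD hsup hε

end IsSubgaussianProcess

end Chaining

section Rademacher

variable {ι : Type*} [Fintype ι]

/-- The law of a family of independent Rademacher signs, encoded as booleans through `signVal`. -/
noncomputable def rademacherMeasure (ι : Type*) [Fintype ι] : Measure (ι → Bool) :=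
  Measure.pi fun _ => uniformOn univ

instance : IsProbabilityMeasure (rademacherMeasure ι) := by
  unfold rademacherMeasure
  infer_instance

theorem measureReal_uniformOn_bool_singleton (b : Bool) :
    (uniformOn (univ : Set Bool)).real {b} = 2⁻¹ := by
  rw [measureReal_def, uniformOn_univ]
  simp

theorem integral_rademacherMeasure [DecidableEq ι] (F : (ι → Bool) → ℝ) :
    ∫ σ, F σ ∂rademacherMeasure ι = (∑ σ, F σ) / 2 ^ Fintype.card ι := by
  rw [integral_fintype .of_finite, Finset.sum_div]
  refine Finset.sum_congr rfl fun σ _ => ?_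
  have hσ : (rademacherMeasure ι).real {σ} = ∏ i, (uniformOn (univ : Set Bool)).real {σ i} := by
    rw [rademacherMeasure, measureReal_def, Measure.pi_singleton, ENNReal.toReal_prod]
    rfl
  simp only [hσ, measureReal_uniformOn_bool_singleton, Finset.prod_const, Finset.card_univ,
    inv_pow, smul_eq_mul]
  ring

theorem abs_signVal (b : Bool) : |signVal b| = 1 := by cases b <;> simp [signVal]

theorem hasSubgaussianMGF_signVal : HasSubgaussianMGF signVal 1 (uniformOn univ) := by
  have hmean : ∫ b, signVal b ∂uniformOn (univ : Set Bool) = 0 := by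
    simp only [integral_fintype .of_finite, measureReal_uniformOn_bool_singleton]
    simp [signVal]
  have := hasSubgaussianMGF_of_mem_Icc_of_integral_eq_zero (a := -1) (b := 1)
    (measurable_of_finite _).aemeasurable (ae_of_all _ fun b => abs_le.mp (abs_signVal b).le) hmean
  convert this
  rw [eq_comm, ← NNReal.coe_inj]
  norm_num

theorem hasSubgaussianMGF_sum_mul_signVal (a : ι → ℝ) :
    HasSubgaussianMGF (fun σ : ι → Bool => ∑ i, a i * signVal (σ i)) (∑ i, ‖a i‖₊ ^ 2)
      (rademacherMeasure ι) := by
  have hindep : iIndepFun (fun i (σ : ι → Bool) => a i * signVal (σ i)) (rademacherMeasure ι) :=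
    iIndepFun_pi (X := fun i b => a i * signVal b) fun i => (measurable_of_finite _).aemeasurable
  refine HasSubgaussianMGF.sum_of_iIndepFun hindep fun i _ => ?_
  have hsign : HasSubgaussianMGF (fun σ : ι → Bool => signVal (σ i)) 1 (rademacherMeasure ι) := by
    refine HasSubgaussianMGF.of_map (X := signVal) (measurable_pi_apply i).aemeasurable ?_
    rw [rademacherMeasure, (measurePreserving_eval _ i).map_eq]
    exact hasSubgaussianMGF_signVal
  have hproxy : ‖a i‖₊ ^ 2 = .mk (a i ^ 2) (sq_nonneg _) * 1 := NNReal.eq (by simp)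
  exact hproxy ▸ hsign.const_mul (a i)

end Rademacher

section EmpiricalMetric

variable {Z : Type*} {n : ℕ} (z : Fin n → Z) {G : Set (Z → ℝ)}

/-- The vector of values of `g` on the sample, scaled so that its Euclidean norm is the empirical
`L²` norm of `g`. -/
noncomputable def sampleVector (g : Z → ℝ) : EuclideanSpace ℝ (Fin n) :=
  WithLp.toLp 2 fun i => (√n)⁻¹ * g (z i)

/-- The pseudometric space of functions with the distance `dnMetric z`. It depends on the sample, so
it is not an instance. -/
noncomputable abbrev empiricalMetric : PseudoMetricSpace (Z → ℝ) :=
  .induced (sampleVector z) inferInstance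

theorem isometry_sampleVector : letI := empiricalMetric z; Isometry (sampleVector z) :=
  fun _ _ => rfl

theorem dist_empiricalMetric (g h : Z → ℝ) :
    letI := empiricalMetric z; dist g h = dnMetric z g h := by
  let := empiricalMetric z
  rw [← (isometry_sampleVector z).dist_eq, EuclideanSpace.dist_eq, dnMetric, Finset.mul_sum]
  simp [sampleVector, Real.dist_eq, ← mul_sub, mul_pow]

theorem subset_closedBall_zero_iff {D : ℝ} : letI := empiricalMetric z;
    G ⊆ closedBall 0 D ↔ ∀ g ∈ G, √((n : ℝ)⁻¹ * ∑ i, g (z i) ^ 2) ≤ D := by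
  simp [subset_def, dist_empiricalMetric, dnMetric]

theorem covNum_eq_toNat_externalCoveringNumber {τ : ℝ} (hτ : 0 ≤ τ) : letI := empiricalMetric z;
    covNum z G τ = (externalCoveringNumber τ.toNNReal G).toNat := by
  let := empiricalMetric z
  have hcover (C : Set (Z → ℝ)) :
      IsCover τ.toNNReal G C ↔ ∀ g ∈ G, ∃ h ∈ C, dnMetric z g h ≤ τ := by
    simp only [isCover_toNNReal_iff hτ, dist_empiricalMetric]
  have hle {C : Finset (Z → ℝ)} (hC : ∀ g ∈ G, ∃ h ∈ C, dnMetric z g h ≤ τ) :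
      externalCoveringNumber τ.toNNReal G ≤ C.card := by
    simpa using ((hcover C).mpr hC).externalCoveringNumber_le_encard
  obtain ⟨C₀, hC₀, hmin⟩ := exists_encard_eq_externalCoveringNumber τ.toNNReal G
  rw [hcover] at hC₀
  rcases C₀.finite_or_infinite with hfin | hinf
  · lift C₀ to Finset (Z → ℝ) using hfin
    rw [encard_coe_eq_coe_finsetCard] at hmin
    rw [← hmin, ENat.toNat_natCast]
    refine le_antisymm (Nat.sInf_le ⟨C₀, rfl, hC₀⟩) (le_csInf ⟨_, C₀, rfl, hC₀⟩ ?_)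
    rintro _ ⟨C, rfl, hC⟩
    exact_mod_cast hmin.trans_le (hle hC)
  · rw [← hmin, hinf.encard_eq, ENat.toNat_top, covNum, Nat.sInf_eq_zero]
    refine Or.inr (eq_empty_of_forall_notMem ?_)
    rintro _ ⟨C, rfl, hC⟩
    simpa [← hmin, hinf.encard_eq] using hle hC

/-- The process whose expected supremum over a class of functions is the empirical Rademacher
complexity of the class. -/
noncomputable def rademacherProcess (g : Z → ℝ) (σ : Fin n → Bool) : ℝ :=
  (n : ℝ)⁻¹ * ∑ i, signVal (σ i) * g (z i)

theorem rademacherProcess_zero (σ : Fin n → Bool) : rademacherProcess z 0 σ = 0 := by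
  simp [rademacherProcess]

theorem rademacherProcess_sub (g h : Z → ℝ) (σ : Fin n → Bool) :
    rademacherProcess z g σ - rademacherProcess z h σ =
      ∑ i, (n : ℝ)⁻¹ * (g (z i) - h (z i)) * signVal (σ i) := by
  simp only [rademacherProcess, ← mul_sub, ← Finset.sum_sub_distrib, Finset.mul_sum]
  exact Finset.sum_congr rfl fun i _ => by ring

theorem isSubgaussianProcess_rademacherProcess : letI := empiricalMetric z;
    IsSubgaussianProcess (rademacherProcess z) (n : ℝ≥0)⁻¹ (rademacherMeasure (Fin n)) := by
  let := empiricalMetric z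
  intro g h
  simp only [rademacherProcess_sub]
  convert hasSubgaussianMGF_sum_mul_signVal fun i => (n : ℝ)⁻¹ * (g (z i) - h (z i))
  rw [← NNReal.coe_inj]
  push_cast
  rw [dist_empiricalMetric, dnMetric, Real.sq_sqrt (by positivity)]
  simp only [Real.norm_eq_abs, sq_abs, mul_pow, ← Finset.mul_sum]
  ring

theorem lipschitzWith_rademacherProcess (σ : Fin n → Bool) : letI := empiricalMetric z;
    LipschitzWith 1 fun g => rademacherProcess z g σ := by
  let := empiricalMetric z
  refine LipschitzWith.of_dist_le_mul fun g h => ?_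
  rw [NNReal.coe_one, one_mul, Real.dist_eq, rademacherProcess_sub, dist_empiricalMetric, dnMetric]
  refine Real.le_sqrt_of_sq_le ?_
  calc |∑ i, (n : ℝ)⁻¹ * (g (z i) - h (z i)) * signVal (σ i)| ^ 2
      ≤ n * ∑ i, ((n : ℝ)⁻¹ * (g (z i) - h (z i)) * signVal (σ i)) ^ 2 := by
        simpa [sq_abs] using sq_sum_le_card_mul_sum_sq (s := Finset.univ)
          (f := fun i => (n : ℝ)⁻¹ * (g (z i) - h (z i)) * signVal (σ i))
    _ = ((n : ℝ)⁻¹ * n * (n : ℝ)⁻¹) * ∑ i, (g (z i) - h (z i)) ^ 2 := by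
        simp only [← sq_abs (_ * signVal _), abs_mul _ (signVal _), abs_signVal, mul_one, sq_abs,
          mul_pow, ← Finset.mul_sum]
        ring
    _ = (n : ℝ)⁻¹ * ∑ i, (g (z i) - h (z i)) ^ 2 := by
        congr 1
        simpa only [inv_inv] using mul_inv_mul_cancel (n : ℝ)⁻¹

theorem empRad_eq_integral_iSup_rademacherProcess :
    empRad G z = ∫ σ, ⨆ g : G, rademacherProcess z g σ ∂rademacherMeasure (Fin n) := by
  rw [integral_rademacherMeasure, Fintype.card_fin]
  rfl

theorem sqrt_log_covNum_div {τ : ℝ} (hτ : 0 ≤ τ) : letI := empiricalMetric z;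
    √(Real.log (covNum z G τ) / n) = √(n : ℝ)⁻¹ * √(metricEntropy G τ) := by
  let := empiricalMetric z
  rw [covNum_eq_toNat_externalCoveringNumber z hτ, metricEntropy, ← Real.sqrt_mul (by positivity),
    div_eq_inv_mul]

end EmpiricalMetric

/-- Dudley entropy integral bound: for every `ε ≥ 0`,
`R̂_n(G) ≤ 4ε + 12 ∫_ε^{sup_{G∈G} √(Ê[G²])} √(log N(G,τ,d_n)/n) dτ`
(hence `R̂_n(G)` is bounded by the infimum over `ε ≥ 0` of the right-hand side). -/
theorem dudley_entropy_integral {Z : Type*} (G : Set (Z → ℝ)) (hGne : G.Nonempty)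
    {n : ℕ} (hn : 0 < n) (z : Fin n → Z)
    (hbdd : BddAbove (Set.range fun g : G =>
      Real.sqrt ((n : ℝ)⁻¹ * ∑ i, ((g : Z → ℝ) (z i)) ^ 2))) :
    ∀ ε : ℝ, 0 ≤ ε →
      empRad G z ≤ 4 * ε +
        12 * ∫ τ in ε..(⨆ g : G, Real.sqrt ((n : ℝ)⁻¹ * ∑ i, ((g : Z → ℝ) (z i)) ^ 2)),
          Real.sqrt (Real.log (covNum z G τ) / n) := by
  intro ε hε
  let := empiricalMetric z
  set D := ⨆ g : G, √((n : ℝ)⁻¹ * ∑ i, (g : Z → ℝ) (z i) ^ 2)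
  have hball : G ⊆ closedBall 0 D :=
    (subset_closedBall_zero_iff z).mpr fun g hg => le_ciSup hbdd ⟨g, hg⟩
  have hD : 0 ≤ D := Real.iSup_nonneg fun g => Real.sqrt_nonneg _
  have hiso := isometry_sampleVector z
  have hmaps : MapsTo (sampleVector z) G (closedBall (sampleVector z 0) D) := fun g hg => by
    simpa [hiso.dist_eq] using hball hg
  have hentropy : ∫ τ in ε..D, √(Real.log (covNum z G τ) / n) =
      √(n : ℝ)⁻¹ * ∫ τ in ε..D, √(metricEntropy G τ) := by
    rw [← intervalIntegral.integral_const_mul]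
    exact intervalIntegral.integral_congr fun τ hτ =>
      sqrt_log_covNum_div z ((le_min hε hD).trans hτ.1)
  have hchaining := (isSubgaussianProcess_rademacherProcess z).integral_iSup_sub_le_entropy_integral
    (lipschitzWith_rademacherProcess z) hGne (totallyBounded_of_isometry hiso hmaps) hball
    .of_finite (intervalIntegrable_sqrt_metricEntropy_of_isometry hiso hD hmaps) hε
  simp only [rademacherProcess_zero, sub_zero, ← empRad_eq_integral_iSup_rademacherProcess]
    at hchaining
  rw [hentropy]
  simpa [mul_assoc] using hchaining
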